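/- (Replacement of the small-scale density by the mesoscopic density, final step in the proof of Theorem 3.1) For every jump rate c and every constant C > 0, lim_{i→∞} limsup_{ε→0} limsup_{m→∞} sup_{μ ∈ P_{m,C}} E_μ | η̄_{o,i} − η̄_{o, b(ε√t_m)} | = 0. -/

import Mathlib

open Filter Pointwise

namespace Tower

variable {Γ : Type} [Group Γ] [DecidableEq Γ]

/-- The ball of radius `n` about the identity in the Cayley graph of `(Γ, S)`, as a `Finset`:
products of at most `n` elements of `S`. -/
def ballF (S : Finset Γ) : ℕ → Finset Γ
  | 0 => {1}
  | n + 1 => ballF S n ∪ ballF S n * S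

lemma one_mem_ballF (S : Finset Γ) (n : ℕ) : (1 : Γ) ∈ ballF S n := by
  induction n with
  | zero => simp [ballF]
  | succ n ih => exact Finset.mem_union_left _ ih

/-- The word norm of `x` with respect to `S`. -/
noncomputable def wordNorm (S : Finset Γ) (x : Γ) : ℕ := sInf {n | x ∈ ballF S n}

/-- `(F i)` is a Følner sequence for `(Γ, S)`. -/
def IsFolner (S : Finset Γ) (F : ℕ → Finset Γ) : Prop :=
  (∀ i, (F i).Nonempty) ∧
    Tendsto (fun i => (((F i * S) \ F i).card : ℝ) / (F i).card) atTop (nhds 0)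

/-- `b(K)`: the largest `i` such that `F i` is contained in the ball of radius `K` about `o`. -/
noncomputable def bFol (S : Finset Γ) (F : ℕ → Finset Γ) (K : ℝ) : ℕ :=
  sSup {i | ∀ x ∈ F i, (wordNorm S x : ℝ) ≤ K}

/-- Exchange the values of a configuration at two coordinates. -/
def exch {α : Type} [DecidableEq α] (x y : α) (η : α → Bool) : α → Bool :=
  fun z => if z = x then η y else if z = y then η x else η z

/-- Exchange of values at two coordinates, on configurations restricted to a `Finset`. -/
def exchOn {α : Type} [DecidableEq α] (A : Finset α) (x y : α)
    (ζ : {a // a ∈ A} → Bool) : {a // a ∈ A} → Bool :=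
  fun z => if (z : α) = x then (if h : y ∈ A then ζ ⟨y, h⟩ else ζ z)
    else if (z : α) = y then (if h : x ∈ A then ζ ⟨x, h⟩ else ζ z) else ζ z

/-- The type of generators. -/
abbrev Gen (S : Finset Γ) : Type _ := {s : Γ // s ∈ S}

/-- A `Γ`-invariant local function bundle for vertices `f : V × Z → ℝ` on the Cayley graph
`X = (V, E)` of `(Γ, S)`, `V = Γ`, `Z = {0,1}^V`. -/
structure LocalBundleV (S : Finset Γ) : Type _ where
  f : Γ → (Γ → Bool) → ℝ
  r : ℕ
  localized : ∀ (x : Γ) (η η' : Γ → Bool),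
    (∀ z ∈ (ballF S r).image (x * ·), η z = η' z) → f x η = f x η'
  invariant : ∀ (σ x : Γ) (η : Γ → Bool), f (σ * x) (fun z => η (σ⁻¹ * z)) = f x η

/-- A jump rate: a symmetric, non-degenerate `Γ`-invariant local function bundle for edges,
an edge being encoded as a pair `(x, s) : Γ × Gen S` with origin `x` and terminus `x * s`. -/
structure JumpRate (S : Finset Γ) : Type _ where
  c : Γ → Gen S → (Γ → Bool) → ℝ
  c₀ : ℝ
  c₀_pos : 0 < c₀
  nondeg : ∀ x s η, c₀ ≤ c x s η
  r : ℕ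
  localized : ∀ (x : Γ) (s : Gen S) (η η' : Γ → Bool),
    (∀ z ∈ (ballF S r).image (x * ·) ∪ (ballF S r).image (x * (s : Γ) * ·), η z = η' z) →
      c x s η = c x s η'
  invariant : ∀ (σ x : Γ) (s : Gen S) (η : Γ → Bool),
    c (σ * x) s (fun z => η (σ⁻¹ * z)) = c x s η
  symm_rev : ∀ (x : Γ) (s : Gen S) (h : (s : Γ)⁻¹ ∈ S) (η : Γ → Bool),
    c (x * (s : Γ)) ⟨(s : Γ)⁻¹, h⟩ η = c x s η
  symm_exch : ∀ (x : Γ) (s : Gen S) (η : Γ → Bool),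
    c x s (exch x (x * (s : Γ)) η) = c x s η

/-- `ρ`-Bernoulli weight on `{0,1}`. -/
def bw (ρ : ℝ) (b : Bool) : ℝ := if b then ρ else 1 - ρ

/-- Expectation with respect to the `ρ`-Bernoulli product measure `ν_ρ` of a cylinder function
depending only on the coordinates in the finite set `A`. -/
noncomputable def expCyl (ρ : ℝ) (A : Finset Γ) (g : (Γ → Bool) → ℝ) : ℝ :=
  ∑ ζ : ({a // a ∈ A} → Bool),
    (∏ a : {a // a ∈ A}, bw ρ (ζ a)) *
      g (fun z => if h : z ∈ A then ζ ⟨z, h⟩ else false)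

/-- The global average `⟨f_o⟩(ρ) = E_{ν_ρ}[f_o]`. -/
noncomputable def globalAvg {S : Finset Γ} (f : LocalBundleV S) (ρ : ℝ) : ℝ :=
  expCyl ρ (ballF S f.r) (f.f 1)

section Quot

variable (N : Subgroup Γ)

/-- The configuration space `Z_m = {0,1}^{V_m}` over the quotient graph `X_m = Γ_m \ X`. -/
abbrev Conf (N : Subgroup Γ) : Type _ := (Γ ⧸ N) → Bool

/-- The `Γ_m`-periodic extension of a configuration on `X_m` to `X`. -/
def liftZ (η : Conf N) : Γ → Bool := fun x => η (QuotientGroup.mk x)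

/-- The function on `V_m × Z_m` induced by a local function bundle. -/
noncomputable def fQ {S : Finset Γ} (f : LocalBundleV S) (v : Γ ⧸ N) (η : Conf N) : ℝ :=
  f.f (Quotient.out v) (liftZ N η)

/-- The jump rate induced on the quotient graph, on the edge `(v, v * s)`. -/
noncomputable def cQ {S : Finset Γ} (c : JumpRate S) (v : Γ ⧸ N) (s : Gen S) (η : Conf N) : ℝ :=
  c.c (Quotient.out v) s (liftZ N η)

variable [N.Normal]

/-- `η^e` on the quotient, for the edge `e = (v, v * s)`. -/
def exchQ [DecidableEq (Γ ⧸ N)] (v : Γ ⧸ N) (s : Γ) (η : Conf N) : Conf N :=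
  exch v (v * QuotientGroup.mk s) η

/-- The graph distance on the quotient graph `X_m`. -/
noncomputable def distQ (S : Finset Γ) (v w : Γ ⧸ N) : ℕ :=
  sInf {n | ∃ x ∈ ballF S n, v * QuotientGroup.mk x = w}

/-- The diameter of the quotient graph `X_m`. -/
noncomputable def diamQ (S : Finset Γ) : ℕ :=
  sSup {k | ∃ v w : Γ ⧸ N, distQ N S v w = k}

variable [Fintype (Γ ⧸ N)] [DecidableEq (Γ ⧸ N)]

/-- `μ` is a probability measure on the finite configuration space `Z_m`. -/
def IsProb (μ : Conf N → ℝ) : Prop := (∀ η, 0 ≤ μ η) ∧ ∑ η, μ η = 1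

/-- The action of `Γ/Γ_m` on `Z_m`. -/
def actQ (σ : Γ ⧸ N) (η : Conf N) : Conf N := fun z => η (σ⁻¹ * z)

/-- `μ` is `Γ/Γ_m`-invariant. -/
def IsInvariant (μ : Conf N → ℝ) : Prop := ∀ σ η, μ (actQ N σ η) = μ η

/-- The uniform ((1/2)-Bernoulli) measure `ν_m` on `Z_m`. -/
noncomputable def nuU : Conf N → ℝ := fun _ => (Fintype.card (Conf N) : ℝ)⁻¹

/-- The density `φ = dμ/dν_m`. -/
noncomputable def dens (μ : Conf N → ℝ) : Conf N → ℝ :=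
  fun η => (Fintype.card (Conf N) : ℝ) * μ η

/-- `√φ` where `φ = dμ/dν_m`. -/
noncomputable def sqrtDens (μ : Conf N → ℝ) : Conf N → ℝ :=
  fun η => Real.sqrt (dens N μ η)

/-- Expectation with respect to a probability measure on `Z_m`. -/
noncomputable def Emeas (μ : Conf N → ℝ) (g : Conf N → ℝ) : ℝ := ∑ η, μ η * g η

/-- The generator `L_m F (η) = Σ_{e ∈ E_m} c(e,η) (F(η^e) - F(η))`. -/
noncomputable def Lgen {S : Finset Γ} (c : JumpRate S) (F : Conf N → ℝ) (η : Conf N) : ℝ :=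
  ∑ e : (Γ ⧸ N) × Gen S, cQ N c e.1 e.2 η * (F (exchQ N e.1 (e.2 : Γ) η) - F η)

/-- The Dirichlet form `I_m(μ) = -∫ √φ L_m √φ dν_m`. -/
noncomputable def ImGen {S : Finset Γ} (c : JumpRate S) (μ : Conf N → ℝ) : ℝ :=
  - ∑ η, nuU N η * (sqrtDens N μ η * Lgen N c (sqrtDens N μ) η)

/-- The Dirichlet form in sum form:
`I_m(μ) = (1/2) Σ_{e ∈ E_m} ∫ c(e,η) (π_e √φ)² dν_m`. -/
noncomputable def ImSum {S : Finset Γ} (c : JumpRate S) (μ : Conf N → ℝ) : ℝ :=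
  (1 / 2) * ∑ e : (Γ ⧸ N) × Gen S, ∑ η, nuU N η *
    (cQ N c e.1 e.2 η * (sqrtDens N μ (exchQ N e.1 (e.2 : Γ) η) - sqrtDens N μ η) ^ 2)

/-- The local average `f̄_{v,i}` on the quotient, over the Følner set `Fi`. -/
noncomputable def fbarQ {S : Finset Γ} (f : LocalBundleV S) (Fi : Finset Γ) (v : Γ ⧸ N)
    (η : Conf N) : ℝ :=
  ((Fi.card : ℝ))⁻¹ * ∑ σ ∈ Fi, fQ N f (QuotientGroup.mk σ * v) η

/-- The local particle density `η̄_{v,i}` on the quotient, over the Følner set `Fi`. -/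
noncomputable def etabarQ (Fi : Finset Γ) (v : Γ ⧸ N) (η : Conf N) : ℝ :=
  ((Fi.card : ℝ))⁻¹ * ∑ σ ∈ Fi, (if η (QuotientGroup.mk σ * v) then (1 : ℝ) else 0)

/-- The image of `E⁰ = {e ∈ E : oe = o or te = o}` in `E_m`. -/
def E0Q (S : Finset Γ) : Finset ((Γ ⧸ N) × Gen S) :=
  Finset.univ.filter fun e => e.1 = 1 ∨ e.1 * QuotientGroup.mk (e.2 : Γ) = 1

/-- The marginal `μ|_Λ` on `Z_Λ = {0,1}^A` of a measure on `Z_m` (identified with its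
`Γ_m`-periodic extension). -/
noncomputable def marg (A : Finset Γ) (μ : Conf N → ℝ) (ζ : {a // a ∈ A} → Bool) : ℝ :=
  ∑ η : Conf N, if (∀ a : {a // a ∈ A}, liftZ N η (a : Γ) = ζ a) then μ η else 0

/-- The density `φ_Λ = d(μ|_Λ)/dν_Λ`. -/
noncomputable def margDens (A : Finset Γ) (μ : Conf N → ℝ) (ζ : {a // a ∈ A} → Bool) : ℝ :=
  (Fintype.card ({a // a ∈ A} → Bool) : ℝ) * marg N A μ ζ

/-- The restricted Dirichlet form
`I°_Λ(μ) = (1/2) Σ_{e ∈ E_Λ} ∫_{Z_Λ} (π_e √φ_Λ)² dν_Λ` for the subgraph `Λ = (A, Eset)`. -/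
noncomputable def IrestV {S : Finset Γ} (A : Finset Γ) (Eset : Finset (Γ × Gen S))
    (μ : Conf N → ℝ) : ℝ :=
  (1 / 2) * ∑ e ∈ Eset, ∑ ζ : ({a // a ∈ A} → Bool),
    (Fintype.card ({a // a ∈ A} → Bool) : ℝ)⁻¹ *
      (Real.sqrt (margDens N A μ (exchOn A e.1 (e.1 * (e.2 : Γ)) ζ)) -
        Real.sqrt (margDens N A μ ζ)) ^ 2

/-- The marginal on `Z_Λ × Z_Λ` of the pushforward `σ̂μ` of `μ` under `η ↦ (η, σ⁻¹η)`. -/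
noncomputable def margTwo (σ : Γ) (A : Finset Γ) (μ : Conf N → ℝ)
    (ζ ζ' : {a // a ∈ A} → Bool) : ℝ :=
  ∑ η : Conf N,
    if ((∀ a : {a // a ∈ A}, liftZ N η (a : Γ) = ζ a) ∧
        (∀ a : {a // a ∈ A}, liftZ N η (σ * (a : Γ)) = ζ' a)) then μ η else 0

/-- The density of `(σ̂μ)|_{Λ×Λ}` with respect to `ν_Λ ⊗ ν_Λ`. -/
noncomputable def margTwoDens (σ : Γ) (A : Finset Γ) (μ : Conf N → ℝ)
    (ζ ζ' : {a // a ∈ A} → Bool) : ℝ :=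
  ((Fintype.card ({a // a ∈ A} → Bool) : ℝ)) ^ 2 * margTwo N σ A μ ζ ζ'

/-- `I^{(o,o)}_{Λ×Λ}(σ̂μ) = (1/2) ∫ (π̃_{o,o} √(d(σ̂μ)|_{Λ×Λ}/d(ν_Λ⊗ν_Λ)))² d(ν_Λ⊗ν_Λ)`. -/
noncomputable def Ioo (σ : Γ) (A : Finset Γ) (h1 : (1 : Γ) ∈ A) (μ : Conf N → ℝ) : ℝ :=
  (1 / 2) * ∑ ζ : ({a // a ∈ A} → Bool), ∑ ζ' : ({a // a ∈ A} → Bool),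
    (((Fintype.card ({a // a ∈ A} → Bool) : ℝ)) ^ 2)⁻¹ *
      (Real.sqrt (margTwoDens N σ A μ (Function.update ζ ⟨1, h1⟩ (ζ' ⟨1, h1⟩))
          (Function.update ζ' ⟨1, h1⟩ (ζ ⟨1, h1⟩))) -
        Real.sqrt (margTwoDens N σ A μ ζ ζ')) ^ 2

/-- The two-block restricted Dirichlet form `I°_{Λ×Λ}(σ̂μ)`, i.e. the Dirichlet form of
`L°_Λ ⊗ 1 + 1 ⊗ L°_Λ` of the square root of the density of `(σ̂μ)|_{Λ×Λ}`. -/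
noncomputable def ItwoRest {S : Finset Γ} (σ : Γ) (A : Finset Γ) (Eset : Finset (Γ × Gen S))
    (μ : Conf N → ℝ) : ℝ :=
  (1 / 2) * ∑ e ∈ Eset, ∑ ζ : ({a // a ∈ A} → Bool), ∑ ζ' : ({a // a ∈ A} → Bool),
    (((Fintype.card ({a // a ∈ A} → Bool) : ℝ)) ^ 2)⁻¹ *
      ((Real.sqrt (margTwoDens N σ A μ (exchOn A e.1 (e.1 * (e.2 : Γ)) ζ) ζ') -
          Real.sqrt (margTwoDens N σ A μ ζ ζ')) ^ 2 +
        (Real.sqrt (margTwoDens N σ A μ ζ (exchOn A e.1 (e.1 * (e.2 : Γ)) ζ')) -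
          Real.sqrt (margTwoDens N σ A μ ζ ζ')) ^ 2)

end Quot

/-- The edge set `E_Λ` of the subgraph `Λ` spanned by the ball of radius `K`. -/
def ELam (S : Finset Γ) (K : ℕ) : Finset (Γ × Gen S) :=
  (ballF S K ×ˢ (Finset.univ : Finset (Gen S))).filter fun e => e.1 * (e.2 : Γ) ∈ ballF S K

/-!
Write `ψ = √(dμ/dν_m)`. The `ℓ²`-displacement `‖ψ ∘ π - ψ‖` of `ψ` under a relabelling `π` of the
vertices is a length function on permutations, and a bound on the Dirichlet form, spread evenly
over the edges by invariance of `μ`, makes it `O(1/√t_m)` for the transposition along an edge.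
Transporting a transposition along a path of length `n` multiplies this by at most `O(n)` (the
moving particle lemma), so at distance `n = ε√t_m` transpositions displace `ψ` by `O(ε)` only.
Hence the pair correlations `E_μ[η_u η_v]`, `u ≠ v`, are constant up to `O(ε)` on such a ball. The
difference of the two densities is a linear statistic `∑ v, w v * η_v` whose weights have total
mass `0`, so the constant part of the correlations cancels in its second moment; the diagonal part
is bounded by `max |w|`, which is small because large Følner sets cover the vertices of the
quotients almost injectively.
-/

/-! ### Displacement under permutations of the sites -/

section PermDisplacement

open Equiv

variable {V α : Type*} [Fintype V] [DecidableEq V] [Fintype α]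

lemma sum_comp_perm {M : Type*} [AddCommMonoid M] (h : (V → α) → M) (π : Perm V) :
    ∑ η : V → α, h (η ∘ π) = ∑ η, h η :=
  Equiv.sum_comp (π.symm.arrowCongr (Equiv.refl α)) h

/-- The `ℓ²`-distance by which relabelling the sites by `π` moves a function `ψ` of the
configuration. For `ψ` the square root of a probability mass function and `π` the transposition
along an edge, its square is the contribution of that edge to the Dirichlet form at unit rates. -/
noncomputable def permDisplacement (ψ : (V → α) → ℝ) (π : Perm V) : ℝ :=
  dist (WithLp.toLp 2 fun η => ψ (η ∘ π) : EuclideanSpace ℝ (V → α)) (WithLp.toLp 2 ψ)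

variable (ψ : (V → α) → ℝ)

lemma permDisplacement_nonneg (π : Perm V) : 0 ≤ permDisplacement ψ π := dist_nonneg

lemma permDisplacement_sq (π : Perm V) :
    permDisplacement ψ π ^ 2 = ∑ η, (ψ (η ∘ π) - ψ η) ^ 2 := by
  simp only [permDisplacement, EuclideanSpace.dist_sq_eq, Real.dist_eq, sq_abs]

lemma permDisplacement_one : permDisplacement ψ 1 = 0 := dist_self _

lemma permDisplacement_mul_le (π ρ : Perm V) :
    permDisplacement ψ (π * ρ) ≤ permDisplacement ψ π + permDisplacement ψ ρ := by
  have hρ : permDisplacement ψ ρ =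
      dist (WithLp.toLp 2 fun η => ψ (η ∘ (π * ρ)) : EuclideanSpace ℝ (V → α))
        (WithLp.toLp 2 fun η => ψ (η ∘ π)) := by
    rw [← sq_eq_sq₀ (permDisplacement_nonneg ψ ρ) dist_nonneg, permDisplacement_sq,
      EuclideanSpace.dist_sq_eq, ← sum_comp_perm _ π]
    simp only [Real.dist_eq, sq_abs, Function.comp_assoc, Perm.coe_mul]
  rw [hρ, add_comm]
  exact dist_triangle _ _ _

variable {ψ}

lemma permDisplacement_conj {ρ : Perm V} (hρ : ∀ η, ψ (η ∘ ρ) = ψ η) (π : Perm V) :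
    permDisplacement ψ (ρ * π * ρ⁻¹) = permDisplacement ψ π := by
  rw [← sq_eq_sq₀ (permDisplacement_nonneg _ _) (permDisplacement_nonneg _ _),
    permDisplacement_sq, permDisplacement_sq,
    ← sum_comp_perm (fun η => (ψ (η ∘ π) - ψ η) ^ 2) ρ]
  refine Finset.sum_congr rfl fun η _ => ?_
  have h_comp : (η ∘ ⇑(ρ * π * ρ⁻¹)) ∘ ρ = (η ∘ ρ) ∘ π := by
    funext z
    simp
  rw [← hρ (η ∘ ⇑(ρ * π * ρ⁻¹)), h_comp, hρ η]

variable (ψ)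

/-- The moving particle lemma: to exchange the values at `x` and `z`, exchange those at `y` and
`z`, then those at `x` and `y`, and undo the first exchange. -/
lemma permDisplacement_swap_le (x y z : V) :
    permDisplacement ψ (swap x z) ≤
      permDisplacement ψ (swap x y) + 2 * permDisplacement ψ (swap y z) := by
  have hxy_nonneg := permDisplacement_nonneg ψ (swap x y)
  have hyz_nonneg := permDisplacement_nonneg ψ (swap y z)
  rcases eq_or_ne x z with rfl | hxz
  · rw [swap_self, ← Perm.one_def, permDisplacement_one]
    positivity
  rcases eq_or_ne x y with rfl | hxy
  · linarith
  rw [swap_comm x z, ← swap_mul_swap_mul_swap hxy hxz]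
  linarith [permDisplacement_mul_le ψ (swap y z * swap x y) (swap y z),
    permDisplacement_mul_le ψ (swap y z) (swap x y)]

variable {ψ}

lemma abs_sum_sq_mul_comp_sub_le (hψ : ∑ η, ψ η ^ 2 = 1) {h : (V → α) → ℝ}
    (hh : ∀ η, |h η| ≤ 1) (π : Perm V) :
    |∑ η, ψ η ^ 2 * h (η ∘ π) - ∑ η, ψ η ^ 2 * h η| ≤ 2 * permDisplacement ψ π := by
  have hψπ : ∑ η, ψ (η ∘ π) ^ 2 = 1 := by rw [sum_comp_perm (fun η => ψ η ^ 2) π, hψ]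
  have h_factor : ∑ η, ψ η ^ 2 * h (η ∘ π) - ∑ η, ψ η ^ 2 * h η =
      ∑ η, (ψ (η ∘ π) - ψ η) * (-(ψ (η ∘ π) + ψ η) * h (η ∘ π)) := by
    rw [← sum_comp_perm (fun η => ψ η ^ 2 * h η) π, ← Finset.sum_sub_distrib]
    exact Finset.sum_congr rfl fun η _ => by ring
  have h_sum_le : ∑ η, (-(ψ (η ∘ π) + ψ η) * h (η ∘ π)) ^ 2 ≤ 2 ^ 2 := calc
    _ ≤ ∑ η, (2 * ψ (η ∘ π) ^ 2 + 2 * ψ η ^ 2) := by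
      refine Finset.sum_le_sum fun η _ => ?_
      have h_sq : h (η ∘ π) ^ 2 ≤ 1 := (sq_le_one_iff_abs_le_one _).2 (hh _)
      rw [mul_pow, neg_sq]
      nlinarith [mul_le_of_le_one_right (sq_nonneg (ψ (η ∘ π) + ψ η)) h_sq,
        sq_nonneg (ψ (η ∘ π) - ψ η)]
    _ = 2 ^ 2 := by
      rw [Finset.sum_add_distrib, ← Finset.mul_sum, ← Finset.mul_sum, hψ, hψπ]
      norm_num
  rw [h_factor]
  refine abs_le_of_sq_le_sq ?_ (mul_nonneg zero_le_two (permDisplacement_nonneg ψ π))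
  calc _ ≤ (∑ η, (ψ (η ∘ π) - ψ η) ^ 2) * ∑ η, (-(ψ (η ∘ π) + ψ η) * h (η ∘ π)) ^ 2 :=
        Finset.sum_mul_sq_le_sq_mul_sq _ _ _
    _ ≤ permDisplacement ψ π ^ 2 * 2 ^ 2 := by
        rw [permDisplacement_sq]
        gcongr
    _ = (2 * permDisplacement ψ π) ^ 2 := by ring

lemma permDisplacement_swap_mul_left {G : Type*} [Group G] [Fintype G] [DecidableEq G]
    {ψ : (G → α) → ℝ} (hψ : ∀ (a : G) (η : G → α), ψ (fun z => η (a * z)) = ψ η) (a x y : G) :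
    permDisplacement ψ (swap (a * x) (a * y)) = permDisplacement ψ (swap x y) := by
  rw [← permDisplacement_conj (ρ := Equiv.mulLeft a) (hψ a) (swap x y), ← swap_apply_apply,
    coe_mulLeft]

/-! ### Second moments of linear statistics -/

/-- The pair correlation `E[f(η_u) f(η_v)]` under the probability mass function `ψ²`. -/
noncomputable def pairCorr (ψ : (V → α) → ℝ) (f : α → ℝ) (u v : V) : ℝ :=
  ∑ η, ψ η ^ 2 * (f (η u) * f (η v))

variable {f : α → ℝ}

lemma pairCorr_comm (ψ : (V → α) → ℝ) (f : α → ℝ) (u v : V) :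
    pairCorr ψ f u v = pairCorr ψ f v u :=
  Finset.sum_congr rfl fun η _ => by rw [mul_comm (f (η u))]

lemma abs_pairCorr_le_one (hψ : ∑ η, ψ η ^ 2 = 1) (hf : ∀ a, |f a| ≤ 1) (u v : V) :
    |pairCorr ψ f u v| ≤ 1 := by
  rw [← hψ]
  refine (Finset.abs_sum_le_sum_abs _ _).trans (Finset.sum_le_sum fun η _ => ?_)
  rw [abs_mul, abs_mul, abs_of_nonneg (sq_nonneg (ψ η))]
  exact mul_le_of_le_one_right (sq_nonneg _) (mul_le_one₀ (hf _) (abs_nonneg _) (hf _))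

lemma abs_pairCorr_sub_left_le (hψ : ∑ η, ψ η ^ 2 = 1) (hf : ∀ a, |f a| ≤ 1) {u x v : V}
    (hvu : v ≠ u) (hvx : v ≠ x) :
    |pairCorr ψ f x v - pairCorr ψ f u v| ≤ 2 * permDisplacement ψ (swap u x) := by
  have h := abs_sum_sq_mul_comp_sub_le hψ (h := fun η => f (η u) * f (η v))
    (fun η => by
      rw [abs_mul]
      exact mul_le_one₀ (hf _) (abs_nonneg _) (hf _)) (swap u x)
  simpa [pairCorr, swap_apply_of_ne_of_ne hvu hvx] using h

lemma abs_pairCorr_sub_le (hψ : ∑ η, ψ η ^ 2 = 1) (hf : ∀ a, |f a| ≤ 1) {A : Set V} {r : ℝ}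
    (hA : ∀ x ∈ A, ∀ y ∈ A, permDisplacement ψ (swap x y) ≤ r) {u v x y : V} (hu : u ∈ A)
    (hv : v ∈ A) (hx : x ∈ A) (hy : y ∈ A) (huv : u ≠ v) (hxy : x ≠ y) :
    |pairCorr ψ f u v - pairCorr ψ f x y| ≤ 4 * r := by
  rcases eq_or_ne v x with rfl | hvx
  · have hr : 0 ≤ r := (permDisplacement_nonneg ψ _).trans (hA u hu v hv)
    have h_move := abs_pairCorr_sub_left_le hψ hf huv.symm hxy
    rw [pairCorr_comm ψ f v y, abs_sub_comm]
    linarith [hA u hu y hy]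
  · have h_first := abs_pairCorr_sub_left_le hψ hf huv.symm hvx
    have h_second := abs_pairCorr_sub_left_le hψ hf hvx.symm hxy
    rw [pairCorr_comm ψ f y x, pairCorr_comm ψ f v x] at h_second
    rw [abs_sub_comm]
    calc _ ≤ _ := abs_sub_le _ (pairCorr ψ f x v) _
      _ ≤ 4 * r := by linarith [hA u hu x hx, hA v hv y hy]

lemma exists_abs_pairCorr_sub_le (hψ : ∑ η, ψ η ^ 2 = 1) (hf : ∀ a, |f a| ≤ 1) {A : Set V}
    {r : ℝ} (hA : ∀ x ∈ A, ∀ y ∈ A, permDisplacement ψ (swap x y) ≤ r) :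
    ∃ κ : ℝ, |κ| ≤ 1 ∧ ∀ u ∈ A, ∀ v ∈ A, u ≠ v → |pairCorr ψ f u v - κ| ≤ 4 * r := by
  rcases A.subsingleton_or_nontrivial with hA_sub | ⟨x, hx, y, hy, hxy⟩
  · exact ⟨0, by simp, fun u hu v hv huv => absurd (hA_sub hu hv) huv⟩
  · exact ⟨pairCorr ψ f x y, abs_pairCorr_le_one hψ hf x y, fun u hu v hv huv =>
      abs_pairCorr_sub_le hψ hf hA hu hv hx hy huv hxy⟩

lemma sum_sq_mul_sum_sq_eq_sum_pairCorr (ψ : (V → α) → ℝ) (f : α → ℝ) (w : V → ℝ) :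
    ∑ η, ψ η ^ 2 * (∑ v, w v * f (η v)) ^ 2 = ∑ u, ∑ v, w u * w v * pairCorr ψ f u v := by
  have h_expand : ∀ η : V → α, ψ η ^ 2 * (∑ v, w v * f (η v)) ^ 2 =
      ∑ u, ∑ v, w u * w v * (ψ η ^ 2 * (f (η u) * f (η v))) := fun η => by
    simp only [sq (∑ _, _), Finset.sum_mul_sum]
    simp only [Finset.mul_sum]
    exact Finset.sum_congr rfl fun u _ => Finset.sum_congr rfl fun v _ => by ring
  simp only [h_expand, pairCorr, Finset.mul_sum]
  rw [Finset.sum_comm]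
  exact Finset.sum_congr rfl fun u _ => Finset.sum_comm

/-- Since the weights sum to zero, `Q` may be replaced by `Q - κ`. -/
lemma sum_sum_mul_mul_le_of_sum_eq_zero {ι : Type*} [Fintype ι] {w : ι → ℝ} {Q : ι → ι → ℝ}
    {κ a b θ : ℝ} (ha : 0 ≤ a) (hw : ∑ v, w v = 0) (hθ : ∀ v, |w v| ≤ θ)
    (h_off : ∀ u ∈ w.support, ∀ v ∈ w.support, u ≠ v → |Q u v - κ| ≤ a)
    (h_diag : ∀ u, |Q u u - κ| ≤ b) :
    ∑ u, ∑ v, w u * w v * Q u v ≤ a * (∑ v, |w v|) ^ 2 + b * θ * ∑ v, |w v| := by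
  classical
  have h_shift : ∑ u, ∑ v, w u * w v * Q u v = ∑ u, ∑ v, w u * w v * (Q u v - κ) := by
    simp only [mul_sub, Finset.sum_sub_distrib, ← Finset.sum_mul, ← Finset.mul_sum, hw]
    simp
  have h_term : ∀ u v, w u * w v * (Q u v - κ) ≤
      a * (|w u| * |w v|) + if u = v then b * θ * |w u| else 0 := by
    intro u v
    refine (le_abs_self _).trans ?_
    rw [abs_mul, abs_mul]
    split_ifs with huv
    · subst huv
      have h_ww : |w u| * |w u| ≤ θ * |w u| := by gcongr; exact hθ u
      nlinarith [mul_le_mul h_ww (h_diag u) (abs_nonneg _)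
        (mul_nonneg ((abs_nonneg _).trans (hθ u)) (abs_nonneg (w u))),
        mul_nonneg ha (mul_self_nonneg |w u|)]
    · rw [add_zero, mul_comm a]
      rcases eq_or_ne (w u) 0 with hu | hu
      · simp [hu]
      rcases eq_or_ne (w v) 0 with hv | hv
      · simp [hv]
      gcongr
      exact h_off u hu v hv huv
  calc _ = _ := h_shift
    _ ≤ ∑ u, ∑ v, (a * (|w u| * |w v|) + if u = v then b * θ * |w u| else 0) :=
      Finset.sum_le_sum fun u _ => Finset.sum_le_sum fun v _ => h_term u v
    _ = a * (∑ v, |w v|) ^ 2 + b * θ * ∑ v, |w v| := by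
      simp only [Finset.sum_add_distrib, ← Finset.mul_sum, ← Finset.sum_mul, Finset.sum_ite_eq,
        Finset.mem_univ, if_true, sq]

lemma sum_sq_mul_sum_sq_le (hψ : ∑ η, ψ η ^ 2 = 1) (hf : ∀ a, |f a| ≤ 1) {w : V → ℝ} {r θ : ℝ}
    (hr : 0 ≤ r) (hw : ∑ v, w v = 0) (hθ : ∀ v, |w v| ≤ θ)
    (h_disp : ∀ x ∈ w.support, ∀ y ∈ w.support, permDisplacement ψ (swap x y) ≤ r) :
    ∑ η, ψ η ^ 2 * (∑ v, w v * f (η v)) ^ 2 ≤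
      4 * r * (∑ v, |w v|) ^ 2 + 2 * θ * ∑ v, |w v| := by
  obtain ⟨κ, hκ, h_off⟩ := exists_abs_pairCorr_sub_le hψ hf h_disp
  rw [sum_sq_mul_sum_sq_eq_sum_pairCorr]
  refine sum_sum_mul_mul_le_of_sum_eq_zero (by positivity) hw hθ h_off fun u => ?_
  linarith [abs_sub (pairCorr ψ f u u) κ, abs_pairCorr_le_one hψ hf u u]

end PermDisplacement

/-! ### Balls and Følner sequences -/

lemma ballF_mono (S : Finset Γ) : Monotone (ballF S) :=
  monotone_nat_of_le_succ fun _ => Finset.subset_union_left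

section SmulSdiff

variable {G β : Type*} [Group G] [MulAction G β] [DecidableEq β]

lemma card_mul_smul_sdiff_le (g h : G) (A : Finset β) :
    (((g * h) • A) \ A).card ≤ ((g • A) \ A).card + ((h • A) \ A).card := calc
  _ ≤ (((g • A) \ A) ∪ ((g • h • A) \ (g • A))).card := by
    rw [mul_smul, Finset.union_comm]
    exact Finset.card_le_card (sdiff_triangle _ _ _)
  _ ≤ _ := Finset.card_union_le _ _
  _ = _ := by rw [← Finset.smul_finset_sdiff, Finset.card_smul_finset]

lemma card_inv_smul_sdiff (g : G) (A : Finset β) :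
    ((g⁻¹ • A) \ A).card = ((g • A) \ A).card := by
  rw [← Finset.card_smul_finset g, Finset.smul_finset_sdiff, smul_inv_smul]
  exact Finset.card_sdiff_comm (Finset.card_smul_finset g A).symm

end SmulSdiff

section Folner

open MulOpposite

variable {S : Finset Γ}

lemma exists_mem_ballF (hS_symm : ∀ s ∈ S, s⁻¹ ∈ S)
    (hS_gen : Subgroup.closure (S : Set Γ) = ⊤) (x : Γ) : ∃ n, x ∈ ballF S n := by
  have hx : x ∈ Subgroup.closure (S : Set Γ) := hS_gen ▸ Subgroup.mem_top x
  induction hx using Subgroup.closure_induction_right with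
  | one => exact ⟨0, one_mem_ballF S 0⟩
  | mul_right y _ s hs ih =>
    obtain ⟨n, hn⟩ := ih
    exact ⟨n + 1, Finset.mem_union_right _ (Finset.mul_mem_mul hn hs)⟩
  | mul_inv_cancel y _ s hs ih =>
    obtain ⟨n, hn⟩ := ih
    exact ⟨n + 1, Finset.mem_union_right _ (Finset.mul_mem_mul hn (hS_symm s hs))⟩

lemma exists_subset_ballF (hS_symm : ∀ s ∈ S, s⁻¹ ∈ S)
    (hS_gen : Subgroup.closure (S : Set Γ) = ⊤) (T : Finset Γ) : ∃ n, T ⊆ ballF S n := by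
  choose n hn using exists_mem_ballF hS_symm hS_gen
  exact ⟨T.sup n, fun x hx => ballF_mono S (Finset.le_sup hx) (hn x)⟩

lemma wordNorm_le_iff (hS_symm : ∀ s ∈ S, s⁻¹ ∈ S)
    (hS_gen : Subgroup.closure (S : Set Γ) = ⊤) {x : Γ} {n : ℕ} :
    wordNorm S x ≤ n ↔ x ∈ ballF S n :=
  ⟨fun h => ballF_mono S h (Nat.sInf_mem (exists_mem_ballF hS_symm hS_gen x)),
    fun h => Nat.sInf_le h⟩

variable {F : ℕ → Finset Γ}

lemma IsFolner.tendsto_card_op_smul_sdiff (hS_gen : Subgroup.closure (S : Set Γ) = ⊤)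
    (hF : IsFolner S F) (g : Γ) :
    Tendsto (fun i => (((op g • F i) \ F i).card : ℝ) / (F i).card) atTop (nhds 0) := by
  have hg : g ∈ Subgroup.closure (S : Set Γ) := hS_gen ▸ Subgroup.mem_top g
  induction hg using Subgroup.closure_induction with
  | mem s hs =>
    refine squeeze_zero (fun i => by positivity) (fun i => ?_) hF.2
    gcongr
    exact Finset.op_smul_finset_subset_mul hs
  | one => simp
  | mul a b _ _ ha hb =>
    refine squeeze_zero (fun i => by positivity) (fun i => ?_) (by simpa using hb.add ha)
    rw [← add_div]
    gcongr
    exact_mod_cast card_mul_smul_sdiff_le (op b) (op a) (F i)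
  | inv a _ ha => simpa only [op_inv, card_inv_smul_sdiff] using ha

lemma IsFolner.eventually_card_mul_le (hS_gen : Subgroup.closure (S : Set Γ) = ⊤)
    (hF : IsFolner S F) (T : Finset Γ) : ∀ᶠ i in atTop, (F i * T).card ≤ 2 * (F i).card := by
  have h_sum : Tendsto (fun i => ∑ g ∈ T, (((op g • F i) \ F i).card : ℝ) / (F i).card) atTop
      (nhds 0) := by
    simpa using tendsto_finsetSum T fun g _ => hF.tendsto_card_op_smul_sdiff hS_gen g
  filter_upwards [h_sum.eventually (gt_mem_nhds one_pos)] with i hi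
  have h_outer : ∑ g ∈ T, ((op g • F i) \ F i).card ≤ (F i).card := by
    rw [← Finset.sum_div, div_lt_one (Nat.cast_pos.2 (hF.1 i).card_pos)] at hi
    exact_mod_cast hi.le
  have h_sub : F i * T ⊆ F i ∪ T.biUnion fun g => (op g • F i) \ F i := by
    rw [← Finset.biUnion_op_smul_finset]
    intro x hx
    simp only [Finset.mem_union, Finset.mem_biUnion, Finset.mem_sdiff] at hx ⊢
    tauto
  calc _ ≤ _ := Finset.card_le_card h_sub
    _ ≤ _ := Finset.card_union_le _ _
    _ ≤ (F i).card + (F i).card := by grw [Finset.card_biUnion_le, h_outer]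
    _ = 2 * (F i).card := (two_mul _).symm

lemma IsFolner.tendsto_card_atTop [Infinite Γ] (hS_gen : Subgroup.closure (S : Set Γ) = ⊤)
    (hF : IsFolner S F) : Tendsto (fun i => (F i).card) atTop atTop := by
  refine tendsto_atTop.2 fun n => ?_
  obtain ⟨T, hT⟩ := Infinite.exists_subset_card_eq Γ (2 * n)
  filter_upwards [hF.eventually_card_mul_le hS_gen T] with i hi
  have h_le : T.card ≤ (F i * T).card := Finset.card_le_card_mul_left (hF.1 i)
  lia

lemma bddAbove_setOf_subset_ballF (hF_card : Tendsto (fun i => (F i).card) atTop atTop)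
    (n : ℕ) : BddAbove {i | F i ⊆ ballF S n} := by
  obtain ⟨j, hj⟩ := eventually_atTop.1 (hF_card.eventually_gt_atTop (ballF S n).card)
  refine ⟨j, fun i hi => ?_⟩
  by_contra! hji
  exact (hj i hji.le).not_ge (Finset.card_le_card hi)

lemma bFol_eq_sSup (hS_symm : ∀ s ∈ S, s⁻¹ ∈ S) (hS_gen : Subgroup.closure (S : Set Γ) = ⊤)
    (F : ℕ → Finset Γ) {K : ℝ} (hK : 0 ≤ K) : bFol S F K = sSup {i | F i ⊆ ballF S ⌊K⌋₊} := by
  simp only [bFol, ← Nat.le_floor_iff hK, wordNorm_le_iff hS_symm hS_gen, Finset.subset_iff]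

lemma tendsto_bFol (hS_symm : ∀ s ∈ S, s⁻¹ ∈ S) (hS_gen : Subgroup.closure (S : Set Γ) = ⊤)
    (hF_card : Tendsto (fun i => (F i).card) atTop atTop) :
    Tendsto (bFol S F) atTop atTop := by
  refine tendsto_atTop.2 fun i => ?_
  obtain ⟨n, hn⟩ := exists_subset_ballF hS_symm hS_gen (F i)
  filter_upwards [eventually_ge_atTop (n : ℝ)] with K hK
  rw [bFol_eq_sSup hS_symm hS_gen F ((Nat.cast_nonneg n).trans hK)]
  exact le_csSup (bddAbove_setOf_subset_ballF hF_card _)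
    (hn.trans (ballF_mono S (Nat.le_floor hK)))

lemma eventually_subset_ballF_bFol (hS_symm : ∀ s ∈ S, s⁻¹ ∈ S)
    (hS_gen : Subgroup.closure (S : Set Γ) = ⊤)
    (hF_card : Tendsto (fun i => (F i).card) atTop atTop) :
    ∀ᶠ K in atTop, F (bFol S F K) ⊆ ballF S ⌊K⌋₊ := by
  obtain ⟨n, hn⟩ := exists_subset_ballF hS_symm hS_gen (F 0)
  filter_upwards [eventually_ge_atTop (n : ℝ)] with K hK
  rw [bFol_eq_sSup hS_symm hS_gen F ((Nat.cast_nonneg n).trans hK)]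
  exact Nat.sSup_mem ⟨0, hn.trans (ballF_mono S (Nat.le_floor hK))⟩
    (bddAbove_setOf_subset_ballF hF_card _)

end Folner

/-! ### Fibers over the quotients -/

/-- The law on `Γ ⧸ N` of the image of a uniformly chosen point of `A`. -/
noncomputable def fiberDensity {G : Type*} [Group G] (N : Subgroup G) [DecidableEq (G ⧸ N)]
    (A : Finset G) (v : G ⧸ N) : ℝ :=
  ((A.filter fun σ : G => (σ : G ⧸ N) = v).card : ℝ) / A.card

section FiberDensity

variable {G : Type*} [Group G] {N : Subgroup G} [DecidableEq (G ⧸ N)] {A : Finset G}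

lemma fiberDensity_nonneg (v : G ⧸ N) : 0 ≤ fiberDensity N A v := by
  unfold fiberDensity
  positivity

lemma exists_mk_eq_of_fiberDensity_ne_zero {v : G ⧸ N} (hv : fiberDensity N A v ≠ 0) :
    ∃ σ ∈ A, (σ : G ⧸ N) = v := by
  contrapose! hv
  simp [fiberDensity, Finset.filter_false_of_mem hv]

lemma sum_fiberDensity_mul [Fintype (G ⧸ N)] (h : G ⧸ N → ℝ) :
    ∑ v, fiberDensity N A v * h v = (A.card : ℝ)⁻¹ * ∑ σ ∈ A, h (σ : G ⧸ N) := by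
  rw [← Finset.sum_fiberwise A (fun σ : G => (σ : G ⧸ N)), Finset.mul_sum]
  refine Finset.sum_congr rfl fun v _ => ?_
  have h_fiber : ∑ σ ∈ A with ((σ : G) : G ⧸ N) = v, h (σ : G ⧸ N) =
      ∑ σ ∈ A with ((σ : G) : G ⧸ N) = v, h v :=
    Finset.sum_congr rfl fun σ hσ => by rw [(Finset.mem_filter.1 hσ).2]
  rw [h_fiber, Finset.sum_const, fiberDensity, nsmul_eq_mul]
  ring

lemma sum_fiberDensity [Fintype (G ⧸ N)] (hA : A.Nonempty) : ∑ v, fiberDensity N A v = 1 := by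
  have h_card : (A.card : ℝ) ≠ 0 := Nat.cast_ne_zero.2 hA.card_ne_zero
  simpa [h_card] using sum_fiberDensity_mul (N := N) (A := A) fun _ => 1

/-- The translates of a fiber of `A` by the points of `T` are disjoint. -/
lemma fiberDensity_le_of_injOn_mk [DecidableEq G] [N.Normal] {T : Finset G}
    (hT : Set.InjOn (QuotientGroup.mk : G → G ⧸ N) T) (hT_pos : T.Nonempty) (hA : A.Nonempty)
    (hAT : (A * T).card ≤ 2 * A.card) (v : G ⧸ N) : fiberDensity N A v ≤ 2 / T.card := by
  set P := A.filter fun σ : G => (σ : G ⧸ N) = v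
  have h_inj : (P * T).card = P.card * T.card := by
    refine Finset.card_mul_iff.2 ?_
    rintro ⟨p, a⟩ ⟨hp, ha⟩ ⟨q, b⟩ ⟨hq, hb⟩ (h : p * a = q * b)
    have hpv : (p : G ⧸ N) = v := (Finset.mem_filter.1 hp).2
    have hqv : (q : G ⧸ N) = v := (Finset.mem_filter.1 hq).2
    have h_mk : (a : G ⧸ N) = b := mul_left_cancel (a := v) <| by
      simpa only [QuotientGroup.mk_mul, hpv, hqv] using congrArg (QuotientGroup.mk (s := N)) h
    obtain rfl := hT ha hb h_mk
    rw [mul_right_cancel h]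
  have h_le : P.card * T.card ≤ 2 * A.card := calc
    _ = (P * T).card := h_inj.symm
    _ ≤ (A * T).card := Finset.card_le_card (Finset.mul_subset_mul_right (Finset.filter_subset _ _))
    _ ≤ 2 * A.card := hAT
  rw [fiberDensity, div_le_div_iff₀ (Nat.cast_pos.2 hA.card_pos) (Nat.cast_pos.2 hT_pos.card_pos)]
  exact_mod_cast h_le

lemma eventually_notMem_of_forall_mem_imp_eq_one {Γs : ℕ → Subgroup G}
    (hdesc : ∀ m, Γs (m + 1) ≤ Γs m) (hsep : ∀ x : G, (∀ m, x ∈ Γs m) → x = 1) {x : G}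
    (hx : x ≠ 1) : ∀ᶠ m in atTop, x ∉ Γs m := by
  obtain ⟨k, hk⟩ := not_forall.1 (mt (hsep x) hx)
  filter_upwards [eventually_ge_atTop k] with m hm h_mem
  exact hk (antitone_nat_of_succ_le hdesc hm h_mem)

lemma eventually_injOn_mk {ι : Type*} {l : Filter ι} {Γs : ι → Subgroup G}
    (hsep : ∀ x : G, x ≠ 1 → ∀ᶠ m in l, x ∉ Γs m) (T : Finset G) :
    ∀ᶠ m in l, Set.InjOn (QuotientGroup.mk : G → G ⧸ Γs m) T := by
  have h_pair : ∀ x y : G, ∀ᶠ m in l, (x : G ⧸ Γs m) = y → x = y := by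
    intro x y
    rcases eq_or_ne x y with hxy | hxy
    · exact Eventually.of_forall fun _ _ => hxy
    · filter_upwards [hsep _ (inv_mul_eq_one.not.2 hxy)] with m hm h
      exact absurd (QuotientGroup.eq.1 h) hm
  have h_all : ∀ᶠ m in l, ∀ x ∈ T, ∀ y ∈ T, (x : G ⧸ Γs m) = y → x = y :=
    (eventually_all_finset T).2 fun x _ => (eventually_all_finset T).2 fun y _ => h_pair x y
  filter_upwards [h_all] with m hm x hx y hy using hm x hx y hy

end FiberDensity

lemma IsFolner.eventually_fiberDensity_le [Infinite Γ] {S : Finset Γ} {F : ℕ → Finset Γ}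
    (hS_gen : Subgroup.closure (S : Set Γ) = ⊤) (hF : IsFolner S F) {Γs : ℕ → Subgroup Γ}
    [∀ m, (Γs m).Normal] [∀ m, DecidableEq (Γ ⧸ Γs m)]
    (hsep : ∀ x : Γ, x ≠ 1 → ∀ᶠ m in atTop, x ∉ Γs m) {θ : ℝ} (hθ : 0 < θ) :
    ∀ᶠ p : ℕ × ℕ in atTop ×ˢ atTop, ∀ v, fiberDensity (Γs p.2) (F p.1) v ≤ θ := by
  obtain ⟨n, hn⟩ := exists_nat_gt (2 / θ)
  have hn_pos : (0 : ℝ) < n := lt_trans (by positivity) hn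
  obtain ⟨T, hT⟩ := Infinite.exists_subset_card_eq Γ n
  have hT_pos : T.Nonempty := Finset.card_pos.1 (hT ▸ Nat.cast_pos.1 hn_pos)
  filter_upwards [(hF.eventually_card_mul_le hS_gen T).prod_mk (eventually_injOn_mk hsep T)]
    with p hp v
  refine (fiberDensity_le_of_injOn_mk hp.2 hT_pos (hF.1 _) hp.1 v).trans ?_
  rw [hT, div_le_comm₀ hn_pos hθ]
  exact hn.le

/-! ### The Dirichlet form and displacements -/

open Equiv (swap)

lemma exch_eq_comp_swap {α : Type} [DecidableEq α] (x y : α) (η : α → Bool) :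
    exch x y η = η ∘ swap x y := by
  funext z
  simp only [exch, Function.comp_apply, Equiv.swap_apply_def]
  split_ifs <;> rfl

lemma IsInvariant.sqrt_comp_mul_left {G : Type} [Group G] {N : Subgroup G} [N.Normal]
    {μ : Conf N → ℝ} (hμ : IsInvariant N μ) (a : G ⧸ N) (η : Conf N) :
    √(μ fun z => η (a * z)) = √(μ η) := by
  have h_act : actQ N a⁻¹ η = fun z => η (a * z) := funext fun z => by rw [actQ, inv_inv]
  rw [← h_act, hμ]

section ConfigurationMeasure

variable {G : Type} [Group G] {N : Subgroup G} [Fintype (G ⧸ N)] [DecidableEq (G ⧸ N)]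
  {μ : Conf N → ℝ}

lemma IsProb.sum_sqrt_sq (hμ : IsProb N μ) : ∑ η, √(μ η) ^ 2 = 1 := by
  simp only [Real.sq_sqrt (hμ.1 _), hμ.2]

lemma IsProb.Emeas_nonneg (hμ : IsProb N μ) {g : Conf N → ℝ} (hg : ∀ η, 0 ≤ g η) :
    0 ≤ Emeas N μ g :=
  Finset.sum_nonneg fun η _ => mul_nonneg (hμ.1 η) (hg η)

lemma IsProb.Emeas_abs_le_sqrt (hμ : IsProb N μ) (g : Conf N → ℝ) :
    Emeas N μ (fun η => |g η|) ≤ √(∑ η, √(μ η) ^ 2 * g η ^ 2) := by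
  refine Real.le_sqrt_of_sq_le ?_
  simpa only [Emeas, sq_abs, Real.sq_sqrt (hμ.1 _)] using
    Real.pow_arith_mean_le_arith_mean_pow_of_even Finset.univ μ (fun η => |g η|)
      (fun η _ => hμ.1 η) hμ.2 even_two

/-- The factor `|Z_m|` in `dμ/dν_m` cancels against the mass `1/|Z_m|` of each configuration
under `ν_m`. -/
lemma nuU_mul_sqrtDens_sub_sq (μ : Conf N → ℝ) (k : ℝ) (η η' : Conf N) :
    nuU N η * (k * (sqrtDens N μ η' - sqrtDens N μ η) ^ 2) = k * (√(μ η') - √(μ η)) ^ 2 := by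
  have h_card : (0 : ℝ) < Fintype.card (Conf N) := Nat.cast_pos.2 Fintype.card_pos
  simp only [sqrtDens, dens, nuU, Real.sqrt_mul h_card.le, ← mul_sub, mul_pow,
    Real.sq_sqrt h_card.le]
  field_simp

lemma etabarQ_one_eq_sum [N.Normal] (A : Finset G) (η : Conf N) :
    etabarQ N A 1 η = ∑ v, fiberDensity N A v * if η v then 1 else 0 := by
  rw [sum_fiberDensity_mul fun v => if η v then 1 else 0, etabarQ]
  simp only [mul_one]

end ConfigurationMeasure

section Dirichlet

variable {S : Finset Γ} {N : Subgroup Γ} [N.Normal] [Fintype (Γ ⧸ N)] [DecidableEq (Γ ⧸ N)]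
  {μ : Conf N → ℝ}

lemma sum_permDisplacement_sq_le_ImSum (c : JumpRate S) (μ : Conf N → ℝ) :
    c.c₀ / 2 * ∑ e : (Γ ⧸ N) × Gen S,
      permDisplacement (fun η => √(μ η)) (swap e.1 (e.1 * ((e.2 : Γ) : Γ ⧸ N))) ^ 2 ≤
        ImSum N c μ := by
  rw [ImSum, div_mul_eq_mul_div, one_div_mul_eq_div, Finset.mul_sum]
  gcongr with e
  rw [permDisplacement_sq, Finset.mul_sum]
  simp only [nuU_mul_sqrtDens_sub_sq, exchQ, exch_eq_comp_swap]
  gcongr with η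
  exact c.nondeg _ _ _

/-- By invariance all edges labelled `s` carry the same share of the Dirichlet form. -/
lemma permDisplacement_swap_one_le_of_ImSum_le {c : JumpRate S} (hμ : IsInvariant N μ) {B : ℝ}
    (hB : ImSum N c μ ≤ B * N.index) {s : Γ} (hs : s ∈ S) :
    permDisplacement (fun η => √(μ η)) (swap 1 (s : Γ ⧸ N)) ≤ √(2 * B / c.c₀) := by
  have h_edge : ∀ v : Γ ⧸ N,
      permDisplacement (fun η => √(μ η)) (swap v (v * (s : Γ ⧸ N))) =
        permDisplacement (fun η => √(μ η)) (swap 1 (s : Γ ⧸ N)) := fun v => by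
    simpa only [mul_one] using permDisplacement_swap_mul_left hμ.sqrt_comp_mul_left v 1 s
  have h_index : (N.index : ℝ) = Fintype.card (Γ ⧸ N) := by
    rw [Subgroup.index_eq_card, Nat.card_eq_fintype_card]
  have h_index_pos : (0 : ℝ) < N.index := h_index ▸ Nat.cast_pos.2 Fintype.card_pos
  have h_sum : N.index * permDisplacement (fun η => √(μ η)) (swap 1 (s : Γ ⧸ N)) ^ 2 ≤
      ∑ e : (Γ ⧸ N) × Gen S,
        permDisplacement (fun η => √(μ η)) (swap e.1 (e.1 * ((e.2 : Γ) : Γ ⧸ N))) ^ 2 := by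
    rw [Fintype.sum_prod_type, h_index, ← nsmul_eq_mul, ← Finset.card_univ, ← Finset.sum_const]
    gcongr with v
    have h_single := Finset.single_le_sum (s := Finset.univ) (f := fun s' : Gen S =>
      permDisplacement (fun η => √(μ η)) (swap v (v * ((s' : Γ) : Γ ⧸ N))) ^ 2)
      (fun _ _ => sq_nonneg _) (Finset.mem_univ ⟨s, hs⟩)
    rwa [h_edge v] at h_single
  refine Real.le_sqrt_of_sq_le ((le_div_iff₀ c.c₀_pos).2 (le_of_mul_le_mul_left ?_ h_index_pos))
  calc _ = 2 * (c.c₀ / 2 * (N.index *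
        permDisplacement (fun η => √(μ η)) (swap 1 (s : Γ ⧸ N)) ^ 2)) := by ring
    _ ≤ 2 * (B * N.index) := by
      have h_c₀ := c.c₀_pos.le
      grw [h_sum, sum_permDisplacement_sq_le_ImSum c μ, hB]
    _ = N.index * (2 * B) := by ring

end Dirichlet

section BallDisplacement

variable {S : Finset Γ} {N : Subgroup Γ} [N.Normal] [Fintype (Γ ⧸ N)] [DecidableEq (Γ ⧸ N)]
  {α : Type*} [Fintype α] {ψ : (Γ ⧸ N → α) → ℝ} {d : ℝ}

lemma permDisplacement_swap_one_le_of_mem_ballF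
    (hψ : ∀ (a : Γ ⧸ N) (η : Γ ⧸ N → α), ψ (fun z => η (a * z)) = ψ η) (hd : 0 ≤ d)
    (hS : ∀ s ∈ S, permDisplacement ψ (swap 1 (s : Γ ⧸ N)) ≤ d) {n : ℕ} {a : Γ}
    (ha : a ∈ ballF S n) : permDisplacement ψ (swap 1 (a : Γ ⧸ N)) ≤ 2 * n * d := by
  induction n generalizing a with
  | zero =>
    obtain rfl := Finset.mem_singleton.1 ha
    simp [← Equiv.Perm.one_def, permDisplacement_one]
  | succ n ih =>
    push_cast
    rcases Finset.mem_union.1 ha with ha | ha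
    · linarith [ih ha]
    · obtain ⟨b, hb, s, hs, rfl⟩ := Finset.mem_mul.1 ha
      have h_edge : permDisplacement ψ (swap (b : Γ ⧸ N) ((b * s : Γ) : Γ ⧸ N)) ≤ d := by
        rw [QuotientGroup.mk_mul]
        simpa only [mul_one, permDisplacement_swap_mul_left hψ] using
          (permDisplacement_swap_mul_left hψ (b : Γ ⧸ N) 1 s).trans_le (hS s hs)
      linarith [permDisplacement_swap_le ψ 1 (b : Γ ⧸ N) ((b * s : Γ) : Γ ⧸ N), ih hb]

lemma permDisplacement_swap_le_of_mem_ballF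
    (hψ : ∀ (a : Γ ⧸ N) (η : Γ ⧸ N → α), ψ (fun z => η (a * z)) = ψ η) (hd : 0 ≤ d)
    (hS : ∀ s ∈ S, permDisplacement ψ (swap 1 (s : Γ ⧸ N)) ≤ d) {n : ℕ} {a b : Γ}
    (ha : a ∈ ballF S n) (hb : b ∈ ballF S n) :
    permDisplacement ψ (swap (a : Γ ⧸ N) b) ≤ 6 * (n * d) := by
  have h_path := permDisplacement_swap_le ψ (a : Γ ⧸ N) 1 b
  rw [Equiv.swap_comm (a : Γ ⧸ N) 1] at h_path
  linarith [permDisplacement_swap_one_le_of_mem_ballF hψ hd hS ha,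
    permDisplacement_swap_one_le_of_mem_ballF hψ hd hS hb]

end BallDisplacement

/-! ### The two-block estimate -/

section TwoBlock

variable {S : Finset Γ} {N : Subgroup Γ} [N.Normal] [Fintype (Γ ⧸ N)] [DecidableEq (Γ ⧸ N)]
  {μ : Conf N → ℝ} {F₁ F₂ : Finset Γ} {θ : ℝ}

lemma Emeas_abs_etabarQ_sub_le (hμ : IsProb N μ) {r : ℝ} (hr : 0 ≤ r)
    (hF₁ : F₁.Nonempty) (hF₂ : F₂.Nonempty)
    (h_disp : ∀ a ∈ F₁ ∪ F₂, ∀ b ∈ F₁ ∪ F₂,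
      permDisplacement (fun η => √(μ η)) (swap (a : Γ ⧸ N) b) ≤ r)
    (hθ₁ : ∀ v, fiberDensity N F₁ v ≤ θ) (hθ₂ : ∀ v, fiberDensity N F₂ v ≤ θ) :
    Emeas N μ (fun η => |etabarQ N F₁ 1 η - etabarQ N F₂ 1 η|) ≤ √(16 * r + 4 * θ) := by
  set w : Γ ⧸ N → ℝ := fiberDensity N F₁ - fiberDensity N F₂ with hw
  have hw_sum : ∑ v, w v = 0 := by
    simp [hw, Finset.sum_sub_distrib, sum_fiberDensity hF₁, sum_fiberDensity hF₂]
  have hw_mass : ∑ v, |w v| ≤ 2 := calc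
    _ ≤ ∑ v, (fiberDensity N F₁ v + fiberDensity N F₂ v) :=
      Finset.sum_le_sum fun v _ => by
        simpa only [hw, Pi.sub_apply, abs_of_nonneg (fiberDensity_nonneg _)] using
          abs_sub (fiberDensity N F₁ v) (fiberDensity N F₂ v)
    _ = 2 := by
      rw [Finset.sum_add_distrib, sum_fiberDensity hF₁, sum_fiberDensity hF₂, one_add_one_eq_two]
  have hw_le : ∀ v, |w v| ≤ θ := fun v =>
    abs_sub_le_of_nonneg_of_le (fiberDensity_nonneg v) (hθ₁ v) (fiberDensity_nonneg v) (hθ₂ v)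
  have hw_support : ∀ v ∈ w.support, ∃ σ ∈ F₁ ∪ F₂, (σ : Γ ⧸ N) = v := by
    intro v hv
    rcases Function.support_sub _ _ hv with hv | hv
    · exact (exists_mk_eq_of_fiberDensity_ne_zero hv).imp fun σ =>
        And.imp_left (Finset.mem_union_left _)
    · exact (exists_mk_eq_of_fiberDensity_ne_zero hv).imp fun σ =>
        And.imp_left (Finset.mem_union_right _)
  have h_moment := sum_sq_mul_sum_sq_le (f := fun b : Bool => if b then 1 else 0)
    hμ.sum_sqrt_sq (fun b => by cases b <;> simp) hr hw_sum hw_le (by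
      intro x hx y hy
      obtain ⟨a, ha, rfl⟩ := hw_support x hx
      obtain ⟨b, hb, rfl⟩ := hw_support y hy
      exact h_disp a ha b hb)
  refine (hμ.Emeas_abs_le_sqrt _).trans (Real.sqrt_le_sqrt ?_)
  calc _ = ∑ η, √(μ η) ^ 2 * (∑ v, w v * if η v then 1 else 0) ^ 2 := by
        simp only [etabarQ_one_eq_sum, ← Finset.sum_sub_distrib, ← sub_mul, hw, Pi.sub_apply]
    _ ≤ 4 * r * (∑ v, |w v|) ^ 2 + 2 * θ * ∑ v, |w v| := h_moment
    _ ≤ 4 * r * 2 ^ 2 + 2 * θ * 2 := by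
        have hθ : 0 ≤ θ := (abs_nonneg _).trans (hw_le 1)
        gcongr
    _ = 16 * r + 4 * θ := by ring

/-- The largest expected difference between the particle densities over `F₁` and over `F₂`,
among the invariant measures whose Dirichlet form is at most `B`. -/
noncomputable def densityGap (N : Subgroup Γ) [N.Normal] [Fintype (Γ ⧸ N)] [DecidableEq (Γ ⧸ N)]
    (c : JumpRate S) (B : ℝ) (F₁ F₂ : Finset Γ) : ℝ :=
  sSup {x : ℝ | ∃ μ : Conf N → ℝ, IsProb N μ ∧ IsInvariant N μ ∧ ImSum N c μ ≤ B ∧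
    x = Emeas N μ (fun η => |etabarQ N F₁ 1 η - etabarQ N F₂ 1 η|)}

variable (c : JumpRate S)

lemma densityGap_nonneg (B : ℝ) (F₁ F₂ : Finset Γ) : 0 ≤ densityGap N c B F₁ F₂ := by
  refine Real.sSup_nonneg ?_
  rintro _ ⟨μ, hμ, -, -, rfl⟩
  exact hμ.Emeas_nonneg fun η => abs_nonneg _

lemma densityGap_le {B : ℝ} {n : ℕ} (hF₁ : F₁.Nonempty) (hF₂ : F₂.Nonempty)
    (hn₁ : F₁ ⊆ ballF S n) (hn₂ : F₂ ⊆ ballF S n)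
    (hθ₁ : ∀ v, fiberDensity N F₁ v ≤ θ) (hθ₂ : ∀ v, fiberDensity N F₂ v ≤ θ) :
    densityGap N c (B * N.index) F₁ F₂ ≤ √(96 * (n * √(2 * B / c.c₀)) + 4 * θ) := by
  refine Real.sSup_le ?_ (Real.sqrt_nonneg _)
  rintro _ ⟨μ, hμ, hμ_inv, hB, rfl⟩
  have h_sub : F₁ ∪ F₂ ⊆ ballF S n := Finset.union_subset hn₁ hn₂
  have h_bound := Emeas_abs_etabarQ_sub_le (r := 6 * (n * √(2 * B / c.c₀))) hμ (by positivity)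
    hF₁ hF₂ (fun a ha b hb => permDisplacement_swap_le_of_mem_ballF hμ_inv.sqrt_comp_mul_left
      (Real.sqrt_nonneg _) (fun s hs => permDisplacement_swap_one_le_of_ImSum_le hμ_inv hB hs)
      (h_sub ha) (h_sub hb)) hθ₁ hθ₂
  rwa [← mul_assoc 16 6, show (16 * 6 : ℝ) = 96 by norm_num] at h_bound

end TwoBlock

/-! ### Passage to the limit -/

lemma limsup_mem_Icc_of_eventually {ι : Type*} {l : Filter ι} [l.NeBot] {f : ι → ℝ} {a b : ℝ}
    (hf : ∀ᶠ x in l, f x ∈ Set.Icc a b) : limsup f l ∈ Set.Icc a b := by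
  have h_ge : ∀ᶠ x in l, a ≤ f x := hf.mono fun _ hx => hx.1
  have h_le : ∀ᶠ x in l, f x ≤ b := hf.mono fun _ hx => hx.2
  exact ⟨le_limsup_of_frequently_le h_ge.frequently ⟨b, h_le⟩,
    limsup_le_of_le (IsBoundedUnder.isCoboundedUnder_le ⟨a, h_ge⟩) h_le⟩

lemma tendsto_limsup_limsup_zero {ι κ ν : Type*} {l₁ : Filter ι} {l₂ : Filter κ} {l₃ : Filter ν}
    [l₂.NeBot] [l₃.NeBot] {u : ι → κ → ν → ℝ} (hu : ∀ i ε m, 0 ≤ u i ε m)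
    (h : ∀ δ > 0, ∀ᶠ i in l₁, ∀ᶠ ε in l₂, ∀ᶠ m in l₃, u i ε m ≤ δ) :
    Tendsto (fun i => limsup (fun ε => limsup (u i ε) l₃) l₂) l₁ (nhds 0) := by
  refine Metric.tendsto_nhds.2 fun δ hδ => ?_
  filter_upwards [h (δ / 2) (half_pos hδ)] with i hi
  have h_mem : limsup (fun ε => limsup (u i ε) l₃) l₂ ∈ Set.Icc 0 (δ / 2) :=
    limsup_mem_Icc_of_eventually <| hi.mono fun ε hε =>
      limsup_mem_Icc_of_eventually <| hε.mono fun m hm => ⟨hu i ε m, hm⟩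
  rw [Real.dist_0_eq_abs, abs_of_nonneg h_mem.1]
  exact h_mem.2.trans_lt (half_lt_self hδ)

lemma tendsto_add_floor_mul_mul_div (R D : ℝ) {ε : ℝ} (hε : 0 ≤ ε) :
    Tendsto (fun s : ℝ => (R + ⌊ε * s⌋₊) * (D / s)) atTop (nhds (ε * D)) := by
  have h_floor := ((tendsto_const_nhds (x := R)).div_atTop tendsto_id).add
    (tendsto_nat_floor_mul_div_atTop hε)
  rw [zero_add] at h_floor
  refine (h_floor.mul_const D).congr fun s => ?_
  simp only [id]
  ring

lemma eventually_densityGap_le [Infinite Γ] {S : Finset Γ} (hS_symm : ∀ s ∈ S, s⁻¹ ∈ S)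
    (hS_gen : Subgroup.closure (S : Set Γ) = ⊤) {Γs : ℕ → Subgroup Γ} [∀ m, (Γs m).Normal]
    [∀ m, Fintype (Γ ⧸ Γs m)] [∀ m, DecidableEq (Γ ⧸ Γs m)]
    (hsep : ∀ x : Γ, x ≠ 1 → ∀ᶠ m in atTop, x ∉ Γs m) {t : ℕ → ℝ}
    (ht_top : Tendsto t atTop atTop) {F : ℕ → Finset Γ} (hF : IsFolner S F)
    (c : JumpRate S) {C : ℝ} (hC : 0 < C) {δ : ℝ} (hδ : 0 < δ) :
    ∀ᶠ i in atTop, ∀ᶠ ε in nhdsWithin (0 : ℝ) (Set.Ioi 0), ∀ᶠ m in atTop,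
      densityGap (Γs m) c (C * (Γs m).index / t m) (F i) (F (bFol S F (ε * √(t m)))) ≤ δ := by
  have h_fiber := hF.eventually_fiberDensity_le hS_gen hsep (θ := δ ^ 2 / 8) (by positivity)
  have hF_card := hF.tendsto_card_atTop hS_gen
  have ht_sqrt : Tendsto (fun m => √(t m)) atTop atTop := Real.tendsto_sqrt_atTop.comp ht_top
  set D := √(2 * C / c.c₀)
  have hD : 0 < D := Real.sqrt_pos.2 (div_pos (by positivity) c.c₀_pos)
  filter_upwards [h_fiber.curry] with i hi
  obtain ⟨R, hR⟩ := exists_subset_ballF hS_symm hS_gen (F i)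
  filter_upwards [Ioo_mem_nhdsGT (show 0 < δ ^ 2 / (192 * D) by positivity)] with ε ⟨hε, hε_lt⟩
  have hεt : Tendsto (fun m => ε * √(t m)) atTop atTop := ht_sqrt.const_mul_atTop hε
  have h_disp : ∀ᶠ m in atTop, ((R : ℝ) + ⌊ε * √(t m)⌋₊) * (D / √(t m)) < δ ^ 2 / 192 :=
    ((tendsto_add_floor_mul_mul_div R D hε.le).comp ht_sqrt).eventually
      (gt_mem_nhds (by rwa [← lt_div_iff₀ hD, div_div]))
  have h_fiber_bFol := (((tendsto_bFol hS_symm hS_gen hF_card).comp hεt).prodMk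
    tendsto_id).eventually h_fiber
  filter_upwards [hi, h_fiber_bFol, h_disp, ht_top.eventually_gt_atTop 0,
    hεt.eventually (eventually_subset_ballF_bFol hS_symm hS_gen hF_card)]
    with m hθ hθ_bFol hm_disp htm h_ball
  have h_gap := densityGap_le c (B := C / t m) (n := R + ⌊ε * √(t m)⌋₊) (hF.1 i) (hF.1 _)
    (hR.trans (ballF_mono S (Nat.le_add_right _ _)))
    (h_ball.trans (ballF_mono S (Nat.le_add_left _ _))) hθ hθ_bFol
  have hD_div : √(2 * (C / t m) / c.c₀) = D / √(t m) := by
    rw [← Real.sqrt_div' _ htm.le]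
    ring_nf
  rw [hD_div, div_mul_eq_mul_div] at h_gap
  refine h_gap.trans (Real.sqrt_le_left hδ.le |>.2 ?_)
  push_cast
  linarith

theorem density_replacement_general [Infinite Γ] (S : Finset Γ) (hS_symm : ∀ s ∈ S, s⁻¹ ∈ S)
    (hS_gen : Subgroup.closure (S : Set Γ) = ⊤) (Γs : ℕ → Subgroup Γ) [∀ m, (Γs m).Normal]
    [∀ m, Fintype (Γ ⧸ Γs m)] [∀ m, DecidableEq (Γ ⧸ Γs m)]
    (hsep : ∀ x : Γ, x ≠ 1 → ∀ᶠ m in atTop, x ∉ Γs m) (t : ℕ → ℝ)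
    (ht_top : Tendsto t atTop atTop) (F : ℕ → Finset Γ) (hF : IsFolner S F)
    (c : JumpRate S) (C : ℝ) (hC : 0 < C) :
    Tendsto (fun i : ℕ =>
        limsup (fun ε : ℝ =>
            limsup (fun m : ℕ => densityGap (Γs m) c (C * (Γs m).index / t m) (F i)
              (F (bFol S F (ε * √(t m))))) atTop)
          (nhdsWithin 0 (Set.Ioi 0)))
      atTop (nhds 0) :=
  tendsto_limsup_limsup_zero (fun _ _ _ => densityGap_nonneg _ _ _ _)
    fun _ hδ => eventually_densityGap_le hS_symm hS_gen hsep ht_top hF c hC hδ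

/-- **Replacement of the small-scale density by the mesoscopic density** (final step in the
proof of Theorem 3.1): for every jump rate `c` and every `C > 0`,
`lim_{i→∞} limsup_{ε→0} limsup_{m→∞} sup_{μ ∈ P_{m,C}}
  E_μ |η̄_{o,i} - η̄_{o,b(ε√t_m)}| = 0`. -/
theorem density_replacement
    {Γ : Type} [Group Γ] [DecidableEq Γ] [Infinite Γ]
    (S : Finset Γ) (hS_symm : ∀ s ∈ S, s⁻¹ ∈ S)
    (hS_gen : Subgroup.closure (S : Set Γ) = ⊤)
    (Γs : ℕ → Subgroup Γ) [∀ m, (Γs m).Normal] [∀ m, (Γs m).FiniteIndex]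
    [∀ m, Fintype (Γ ⧸ Γs m)] [∀ m, DecidableEq (Γ ⧸ Γs m)]
    (hdesc : ∀ m, Γs (m + 1) ≤ Γs m)
    (hsep : ∀ x : Γ, (∀ m, x ∈ Γs m) → x = 1)
    (t : ℕ → ℝ) (ht_pos : ∀ m, 0 < t m) (ht_mono : StrictMono t)
    (ht_top : Tendsto t atTop atTop)
    (ht_diam : ∀ m, Real.sqrt (t m) ≤ 2 * (diamQ (Γs m) S : ℝ))
    (F : ℕ → Finset Γ) (hF : IsFolner S F)
    (c : JumpRate S) (C : ℝ) (hC : 0 < C) :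
    Tendsto (fun i : ℕ =>
        limsup (fun ε : ℝ =>
            limsup (fun m : ℕ =>
                sSup {x : ℝ | ∃ μ : Conf (Γs m) → ℝ,
                  IsProb (Γs m) μ ∧ IsInvariant (Γs m) μ ∧
                    ImSum (Γs m) c μ ≤ C * ((Γs m).index : ℝ) / t m ∧
                    x = Emeas (Γs m) μ (fun η =>
                      |etabarQ (Γs m) (F i) 1 η -
                        etabarQ (Γs m) (F (bFol S F (ε * Real.sqrt (t m)))) 1 η|)})
              atTop)
          (nhdsWithin 0 (Set.Ioi 0)))
      atTop (nhds 0) := by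
  exact density_replacement_general S hS_symm hS_gen Γs
    (fun _ => eventually_notMem_of_forall_mem_imp_eq_one hdesc hsep) t ht_top F hF c C hC

end Tower
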